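/- arXiv:2003.02030 — 4 statements merged into one kernel-verified Lean document; each statement's English description precedes it below -/
import Mathlib

section
/- For probability measures P and ν on a measurable space X, the supremum of ∫ c dP over all measurable functions c : X → ℝ such that ∫ e^c dν = 1 and ∫ c dP is well defined (not +∞ − ∞) equals D_KL(P | ν) (as elements of the extended real line). Equivalently, S^ν(P) = −D_KL(P | ν). -/
/-!
For `P ≪ ν` write `l` for the log-likelihood ratio `log (dP/dν)`. Integrating the tangent-line
inequality `c ≤ l + (exp (c - l) - 1)` against `P` gives `∫ c dP ≤ ∫ l dP`, because
`∫ exp (c - l) dP ≤ ∫ exp c dν = 1`. The choice `c = l` would be optimal, but it is unavailable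
where the density vanishes: there `exp l` should be `0`. Mixing `P` with a small multiple of the
normalized `ν` gives a positive density whose logarithm is bounded below and loses at most an
arbitrarily small constant against `l`. If `P` is not absolutely continuous, a `ν`-null set charged
by `P` can carry an arbitrarily large value of `c` without changing `∫ exp c dν`.
-/

open MeasureTheory Real ENNReal

noncomputable section
open scoped Classical

/-- The extended-real integral `∫ f⁺ dμ − ∫ f⁻ dμ`, valued in `EReal`. -/
def eInt {α : Type*} [MeasurableSpace α] (μ : Measure α) (f : α → ℝ) : EReal :=
  ((∫⁻ x, ENNReal.ofReal (f x) ∂μ : ℝ≥0∞) : EReal)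
    - ((∫⁻ x, ENNReal.ofReal (-f x) ∂μ : ℝ≥0∞) : EReal)

/-- The extended integral of `f` with respect to `μ` is well defined (not `+∞ − ∞`). -/
def IntWellDef {α : Type*} [MeasurableSpace α] (μ : Measure α) (f : α → ℝ) : Prop :=
  (∫⁻ x, ENNReal.ofReal (f x) ∂μ ≠ ⊤) ∨ (∫⁻ x, ENNReal.ofReal (-f x) ∂μ ≠ ⊤)

/-- Kullback–Leibler divergence `D_KL(μ | ν) = ∫ log (dμ/dν) dμ` if `μ ≪ ν`, `+∞` otherwise. -/
def KL {α : Type*} [MeasurableSpace α] (μ ν : Measure α) : EReal :=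
  if μ ≪ ν then eInt μ (fun x => Real.log ((μ.rnDeriv ν x).toReal)) else ⊤

/-- `S^ν(P)`, minus the supremum of `∫ c dP` over measurable `c` with `∫ e^c dν = 1`
and `∫ c dP` well defined. -/
def SEnt {X : Type*} [MeasurableSpace X] (ν P : Measure X) : EReal :=
  - sSup { r : EReal | ∃ c : X → ℝ, Measurable c ∧ (∫ x, Real.exp (c x) ∂ν) = 1 ∧
      IntWellDef P c ∧ r = eInt P c }

section ExtendedIntegral

variable {α : Type*} [MeasurableSpace α] {μ : Measure α} {f g h : α → ℝ}

lemma integrable_of_lintegral_ofReal_ne_top (hf : AEStronglyMeasurable f μ)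
    (hpos : ∫⁻ x, ENNReal.ofReal (f x) ∂μ ≠ ⊤) (hneg : ∫⁻ x, ENNReal.ofReal (-f x) ∂μ ≠ ⊤) :
    Integrable f μ := by
  refine ⟨hf, ?_⟩
  have enorm_le (x : α) : ‖f x‖ₑ ≤ ENNReal.ofReal (f x) + ENNReal.ofReal (-f x) := by
    rw [Real.enorm_eq_ofReal_abs]
    rcases abs_choice (f x) with habs | habs <;> simp [habs]
  calc ∫⁻ x, ‖f x‖ₑ ∂μ
      ≤ ∫⁻ x, (ENNReal.ofReal (f x) + ENNReal.ofReal (-f x)) ∂μ := lintegral_mono enorm_le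
    _ = ∫⁻ x, ENNReal.ofReal (f x) ∂μ + ∫⁻ x, ENNReal.ofReal (-f x) ∂μ :=
        lintegral_add_left' hf.aemeasurable.ennreal_ofReal _
    _ < ⊤ := ENNReal.add_lt_top.2 ⟨hpos.lt_top, hneg.lt_top⟩

lemma lintegral_ofReal_ne_top_of_le_add (hf : ∫⁻ x, ENNReal.ofReal (f x) ∂μ ≠ ⊤)
    (hh : Integrable h μ) (hle : g ≤ᵐ[μ] f + h) : ∫⁻ x, ENNReal.ofReal (g x) ∂μ ≠ ⊤ := by
  refine ne_top_of_le_ne_top (ENNReal.add_ne_top.2 ⟨hf, hh.lintegral_lt_top.ne⟩) ?_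
  calc ∫⁻ x, ENNReal.ofReal (g x) ∂μ
      ≤ ∫⁻ x, (ENNReal.ofReal (f x) + ENNReal.ofReal (h x)) ∂μ := by
        refine lintegral_mono_ae (hle.mono fun x hx ↦ ?_)
        exact (ENNReal.ofReal_le_ofReal hx).trans ENNReal.ofReal_add_le
    _ = ∫⁻ x, ENNReal.ofReal (f x) ∂μ + ∫⁻ x, ENNReal.ofReal (h x) ∂μ :=
        lintegral_add_right' _ hh.aemeasurable.ennreal_ofReal

lemma intWellDef_of_integrable_le (hg : Integrable g μ) (hle : g ≤ᵐ[μ] f) : IntWellDef μ f := by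
  refine .inr (lintegral_ofReal_ne_top_of_le_add (f := 0) (h := -g) (by simp) hg.neg ?_)
  filter_upwards [hle] with x hx
  simpa using hx

lemma eInt_of_integrable (hf : Integrable f μ) : eInt μ f = ↑(∫ x, f x ∂μ) := by
  have hneg : ∫⁻ x, ENNReal.ofReal (-f x) ∂μ ≠ ⊤ := hf.neg.lintegral_lt_top.ne
  rw [eInt, integral_eq_lintegral_pos_part_sub_lintegral_neg_part hf, EReal.coe_sub,
    EReal.coe_ennreal_toReal hf.lintegral_lt_top.ne, EReal.coe_ennreal_toReal hneg]

lemma eInt_eq_bot (hneg : ∫⁻ x, ENNReal.ofReal (-f x) ∂μ = ⊤) : eInt μ f = ⊥ := by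
  -- This includes integrals that are not well defined: in `EReal`, `⊤ - ⊤ = ⊥`.
  rw [eInt, hneg, EReal.coe_ennreal_top, EReal.sub_top]

lemma eInt_eq_top (hpos : ∫⁻ x, ENNReal.ofReal (f x) ∂μ = ⊤)
    (hneg : ∫⁻ x, ENNReal.ofReal (-f x) ∂μ ≠ ⊤) : eInt μ f = ⊤ := by
  rw [eInt, hpos, EReal.coe_ennreal_top, EReal.top_sub (by simpa using hneg)]

lemma eInt_le_eInt_add_integral (hf : AEStronglyMeasurable f μ) (hg : AEStronglyMeasurable g μ)
    (hh : Integrable h μ) (hle : f ≤ᵐ[μ] g + h) :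
    eInt μ f ≤ eInt μ g + ↑(∫ x, h x ∂μ) := by
  by_cases hf_neg : ∫⁻ x, ENNReal.ofReal (-f x) ∂μ = ⊤
  · exact eInt_eq_bot hf_neg ▸ bot_le
  have hg_neg : ∫⁻ x, ENNReal.ofReal (-g x) ∂μ ≠ ⊤ := by
    refine lintegral_ofReal_ne_top_of_le_add hf_neg hh (hle.mono fun x hx ↦ ?_)
    simp only [Pi.add_apply] at hx ⊢
    linarith
  by_cases hg_pos : ∫⁻ x, ENNReal.ofReal (g x) ∂μ = ⊤
  · rw [eInt_eq_top hg_pos hg_neg, EReal.top_add_coe]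
    exact le_top
  have hf_int : Integrable f μ := integrable_of_lintegral_ofReal_ne_top hf
    (lintegral_ofReal_ne_top_of_le_add hg_pos hh hle) hf_neg
  have hg_int : Integrable g μ := integrable_of_lintegral_ofReal_ne_top hg hg_pos hg_neg
  rw [eInt_of_integrable hf_int, eInt_of_integrable hg_int, ← EReal.coe_add, EReal.coe_le_coe_iff,
    ← integral_add hg_int hh]
  exact integral_mono_ae hf_int (hg_int.add hh) hle

end ExtendedIntegral

lemma mul_exp_sub_log_le {r : ℝ} (hr : 0 ≤ r) (a : ℝ) : r * exp (a - log r) ≤ exp a := by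
  rcases hr.eq_or_lt with rfl | hr
  · simpa using (exp_pos a).le
  · rw [exp_sub, exp_log hr, mul_div_cancel₀ _ hr.ne']

section DonskerVaradhan

open Filter Topology

variable {X : Type*} [MeasurableSpace X] {P ν : Measure X} {c : X → ℝ} {t : ℝ}

lemma rnDeriv_mul_exp_sub_llr_le (P ν : Measure X) (c : X → ℝ) (x : X) :
    (P.rnDeriv ν x).toReal * exp (c x - llr P ν x) ≤ exp (c x) :=
  mul_exp_sub_log_le ENNReal.toReal_nonneg (c x)

lemma integrable_exp_sub_llr [SigmaFinite P] [SigmaFinite ν] (hac : P ≪ ν)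
    (hexp : Integrable (fun x ↦ exp (c x)) ν) :
    Integrable (fun x ↦ exp (c x - llr P ν x)) P := by
  rw [← integrable_toReal_rnDeriv_mul_iff hac]
  have hc : AEMeasurable c ν := aemeasurable_of_aemeasurable_exp hexp.aemeasurable
  have hmeas : AEMeasurable (fun x ↦ (P.rnDeriv ν x).toReal * exp (c x - llr P ν x)) ν :=
    (P.measurable_rnDeriv ν).ennreal_toReal.aemeasurable.mul
      (hc.sub (measurable_llr P ν).aemeasurable).exp
  refine hexp.mono' hmeas.aestronglyMeasurable (.of_forall fun x ↦ ?_)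
  rw [norm_of_nonneg (by positivity)]
  exact rnDeriv_mul_exp_sub_llr_le P ν c x

lemma integral_exp_sub_llr_le [SigmaFinite P] [SigmaFinite ν] (hac : P ≪ ν)
    (hexp : Integrable (fun x ↦ exp (c x)) ν) :
    ∫ x, exp (c x - llr P ν x) ∂P ≤ ∫ x, exp (c x) ∂ν := by
  rw [← integral_rnDeriv_smul hac]
  refine integral_mono ?_ hexp (rnDeriv_mul_exp_sub_llr_le P ν c)
  exact (integrable_rnDeriv_smul_iff hac).2 (integrable_exp_sub_llr hac hexp)

lemma eInt_le_eInt_llr_add [IsFiniteMeasure P] [SigmaFinite ν] (hac : P ≪ ν)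
    (hexp : Integrable (fun x ↦ exp (c x)) ν) :
    eInt P c ≤ eInt P (llr P ν) + ↑(∫ x, exp (c x) ∂ν - P.real Set.univ) := by
  have hc : AEMeasurable c P :=
    (aemeasurable_of_aemeasurable_exp hexp.aemeasurable).mono_ac hac
  have hint := integrable_exp_sub_llr hac hexp
  have tangent_le : c ≤ llr P ν + fun x ↦ exp (c x - llr P ν x) - 1 := fun x ↦ by
    have := add_one_le_exp (c x - llr P ν x)
    simp only [Pi.add_apply]
    linarith
  calc eInt P c
      ≤ eInt P (llr P ν) + ↑(∫ x, (exp (c x - llr P ν x) - 1) ∂P) :=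
        eInt_le_eInt_add_integral hc.aestronglyMeasurable
          (measurable_llr P ν).aestronglyMeasurable (hint.sub (integrable_const 1))
          (.of_forall tangent_le)
    _ ≤ eInt P (llr P ν) + ↑(∫ x, exp (c x) ∂ν - P.real Set.univ) := by
        gcongr
        rw [integral_sub hint (integrable_const 1), integral_const, smul_eq_mul, mul_one]
        gcongr
        exact integral_exp_sub_llr_le hac hexp

/-- For `P ≪ ν`, the logarithm of the `ν`-density of the mixture `t P + (1 - t) ν / ν(X)`; for
`t < 1` this density is bounded away from `0`, so that the logarithm is meaningful everywhere. -/
def logMixture (P ν : Measure X) (t : ℝ) (x : X) : ℝ :=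
  log (t * (P.rnDeriv ν x).toReal + (1 - t) / ν.real Set.univ)

lemma measurable_logMixture (P ν : Measure X) (t : ℝ) : Measurable (logMixture P ν t) := by
  unfold logMixture
  fun_prop

lemma llr_add_log_le_logMixture [SigmaFinite P] [SigmaFinite ν] (hac : P ≪ ν) (ht₀ : 0 < t)
    (ht₁ : t ≤ 1) : ∀ᵐ x ∂P, llr P ν x + log t ≤ logMixture P ν t x := by
  filter_upwards [Measure.rnDeriv_pos hac, hac.ae_le (P.rnDeriv_lt_top ν)] with x hpos hfin
  have hx : 0 < (P.rnDeriv ν x).toReal := ENNReal.toReal_pos hpos.ne' hfin.ne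
  rw [llr, add_comm, ← log_mul ht₀.ne' hx.ne']
  refine log_le_log (by positivity) (le_add_of_nonneg_right ?_)
  exact div_nonneg (by linarith) measureReal_nonneg

lemma eInt_llr_le_eInt_logMixture_add_neg_log [IsProbabilityMeasure P] [SigmaFinite ν]
    (hac : P ≪ ν) (ht₀ : 0 < t) (ht₁ : t ≤ 1) :
    eInt P (llr P ν) ≤ eInt P (logMixture P ν t) + ↑(-log t) := by
  have hle := eInt_le_eInt_add_integral (measurable_llr P ν).aestronglyMeasurable
    (measurable_logMixture P ν t).aestronglyMeasurable (integrable_const (-log t))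
    ((llr_add_log_le_logMixture hac ht₀ ht₁).mono fun x hx ↦ le_add_neg_iff_add_le.2 hx)
  simpa using hle

section FiniteReference

variable [IsFiniteMeasure ν] [NeZero ν]

lemma log_le_logMixture (ht₀ : 0 ≤ t) (ht₁ : t < 1) (x : X) :
    Real.log ((1 - t) / ν.real Set.univ) ≤ logMixture P ν t x :=
  log_le_log (div_pos (by linarith) measureReal_univ_pos)
    (le_add_of_nonneg_left (by positivity))

lemma integral_exp_logMixture [IsProbabilityMeasure P] (hac : P ≪ ν) (ht₀ : 0 ≤ t) (ht₁ : t < 1) :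
    ∫ x, exp (logMixture P ν t x) ∂ν = 1 := by
  have hν : 0 < ν.real Set.univ := measureReal_univ_pos
  have density_pos (x : X) : 0 < t * (P.rnDeriv ν x).toReal + (1 - t) / ν.real Set.univ :=
    add_pos_of_nonneg_of_pos (by positivity) (div_pos (by linarith) hν)
  simp only [logMixture, exp_log (density_pos _)]
  rw [integral_add (Measure.integrable_toReal_rnDeriv.const_mul t) (integrable_const _),
    integral_const_mul, Measure.integral_toReal_rnDeriv hac, integral_const, probReal_univ,
    smul_eq_mul, mul_div_cancel₀ _ hν.ne']
  ring

lemma exists_integral_eq_of_not_absolutelyContinuous [IsFiniteMeasure P]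
    (hac : ¬ P ≪ ν) (M : ℝ) :
    ∃ c : X → ℝ, Measurable c ∧ ∫ x, exp (c x) ∂ν = 1 ∧ Integrable c P ∧ ∫ x, c x ∂P = M := by
  obtain ⟨s, hs, hνs, hPs⟩ : ∃ s, MeasurableSet s ∧ ν s = 0 ∧ P s ≠ 0 := by
    by_contra! hnull
    exact hac (.mk hnull)
  have hPs_pos : 0 < P.real s := ENNReal.toReal_pos hPs (measure_ne_top P s)
  have hν : 0 < ν.real Set.univ := measureReal_univ_pos
  set b := -log (ν.real Set.univ)
  set K := (M - P.real Set.univ * b) / P.real s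
  have hK : Integrable (s.indicator fun _ ↦ K) P := (integrable_const K).indicator hs
  refine ⟨fun x ↦ s.indicator (fun _ ↦ K) x + b, (measurable_const.indicator hs).add_const b, ?_,
    hK.add (integrable_const b), ?_⟩
  · have exp_eq : (fun x ↦ exp (s.indicator (fun _ ↦ K) x + b)) =ᵐ[ν]
        fun _ ↦ (ν.real Set.univ)⁻¹ := by
      filter_upwards [measure_eq_zero_iff_ae_notMem.1 hνs] with x hx
      rw [Set.indicator_of_notMem hx, zero_add, exp_neg, exp_log hν]
    rw [integral_congr_ae exp_eq, integral_const, smul_eq_mul, mul_inv_cancel₀ hν.ne']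
  · rw [integral_add hK (integrable_const b), integral_indicator_const K hs, integral_const,
      smul_eq_mul, smul_eq_mul, mul_div_cancel₀ _ hPs_pos.ne', sub_add_cancel]

end FiniteReference

/-- The values `∫ c dP` over the competitors `c` in the variational formula for `KL P ν`. -/
def normalizedIntegrals (P ν : Measure X) : Set EReal :=
  { r | ∃ c : X → ℝ, Measurable c ∧ (∫ x, exp (c x) ∂ν) = 1 ∧ IntWellDef P c ∧ r = eInt P c }

lemma sSup_normalizedIntegrals_le [IsProbabilityMeasure P] [SigmaFinite ν] (hac : P ≪ ν) :
    sSup (normalizedIntegrals P ν) ≤ eInt P (llr P ν) := by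
  refine sSup_le ?_
  rintro _ ⟨c, -, hexp, -, rfl⟩
  simpa [hexp] using eInt_le_eInt_llr_add hac (integrable_of_integral_eq_one hexp)

lemma sSup_normalizedIntegrals_eq_top [IsFiniteMeasure P] [IsFiniteMeasure ν] [NeZero ν]
    (hac : ¬ P ≪ ν) : sSup (normalizedIntegrals P ν) = ⊤ := by
  refine EReal.eq_top_iff_forall_lt _ |>.2 fun M ↦ ?_
  obtain ⟨c, hc, hexp, hint, hM⟩ := exists_integral_eq_of_not_absolutelyContinuous hac (M + 1)
  calc (M : EReal) < ↑(∫ x, c x ∂P) := by rw [hM]; exact_mod_cast lt_add_one M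
    _ = eInt P c := (eInt_of_integrable hint).symm
    _ ≤ sSup (normalizedIntegrals P ν) :=
        le_sSup ⟨c, hc, hexp, intWellDef_of_integrable_le hint .rfl, rfl⟩

variable [IsProbabilityMeasure P] [IsFiniteMeasure ν] [NeZero ν]

lemma eInt_logMixture_mem_normalizedIntegrals (hac : P ≪ ν) (ht₀ : 0 ≤ t) (ht₁ : t < 1) :
    eInt P (logMixture P ν t) ∈ normalizedIntegrals P ν :=
  ⟨_, measurable_logMixture P ν t, integral_exp_logMixture hac ht₀ ht₁,
    intWellDef_of_integrable_le (integrable_const _) (.of_forall (log_le_logMixture ht₀ ht₁)), rfl⟩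

lemma le_sSup_normalizedIntegrals (hac : P ≪ ν) :
    eInt P (llr P ν) ≤ sSup (normalizedIntegrals P ν) := by
  set S := sSup (normalizedIntegrals P ν)
  have le_add_neg_log : ∀ t ∈ Set.Ioo (0 : ℝ) 1, eInt P (llr P ν) ≤ S + ↑(-log t) :=
    fun t ⟨ht₀, ht₁⟩ ↦ (eInt_llr_le_eInt_logMixture_add_neg_log hac ht₀ ht₁.le).trans <|
      add_le_add_left (le_sSup (eInt_logMixture_mem_normalizedIntegrals hac ht₀.le ht₁)) _
  have tendsto_S : Tendsto (fun t : ℝ ↦ S + ↑(-log t)) (𝓝[<] 1) (𝓝 S) := by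
    have hlog : ContinuousAt (fun t : ℝ ↦ ((-log t : ℝ) : EReal)) 1 :=
      continuous_coe_real_ereal.continuousAt.comp (continuousAt_log one_ne_zero).neg
    have hadd : ContinuousAt (fun t : ℝ ↦ S + ↑(-log t)) 1 :=
      (EReal.continuousAt_add (.inr (EReal.coe_ne_bot _)) (.inr (EReal.coe_ne_top _))).comp₂
        continuousAt_const hlog
    simpa using hadd.tendsto.mono_left nhdsWithin_le_nhds
  exact ge_of_tendsto tendsto_S (eventually_of_mem (Ioo_mem_nhdsLT one_pos) le_add_neg_log)

end DonskerVaradhan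

theorem statement0_general {X : Type*} [MeasurableSpace X] (P ν : Measure X)
    [IsProbabilityMeasure P] [IsFiniteMeasure ν] [NeZero ν] :
    sSup { r : EReal | ∃ c : X → ℝ, Measurable c ∧ (∫ x, Real.exp (c x) ∂ν) = 1 ∧
        IntWellDef P c ∧ r = eInt P c } = KL P ν
      ∧ SEnt ν P = - KL P ν := by
  have sSup_eq : sSup (normalizedIntegrals P ν) = KL P ν := by
    by_cases hac : P ≪ ν
    · rw [KL, if_pos hac]
      exact (sSup_normalizedIntegrals_le hac).antisymm (le_sSup_normalizedIntegrals hac)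
    · rw [KL, if_neg hac, sSup_normalizedIntegrals_eq_top hac]
  exact ⟨sSup_eq, congrArg Neg.neg sSup_eq⟩

/-- The supremum of `∫ c dP` over all measurable `c : X → ℝ` with `∫ e^c dν = 1` and `∫ c dP`
well defined equals `D_KL(P | ν)`; equivalently, `S^ν(P) = −D_KL(P | ν)`. -/
theorem statement0 {X : Type*} [MeasurableSpace X] (P ν : Measure X)
    [IsProbabilityMeasure P] [IsProbabilityMeasure ν] :
    sSup { r : EReal | ∃ c : X → ℝ, Measurable c ∧ (∫ x, Real.exp (c x) ∂ν) = 1 ∧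
        IntWellDef P c ∧ r = eInt P c } = KL P ν
      ∧ SEnt ν P = - KL P ν :=
  statement0_general P ν

end
end

section
/- Let X and Y be measurable spaces, ν̂ a probability kernel from Y to X, and π a probability measure on X × Y with y-marginal Q. If π is not absolutely continuous with respect to the measure ν̂ dQ, then H^{ν̂}(π) = −∞; that is, the supremum of ∫ c dπ over ν̂-normalized measurable functions c is +∞. -/
open MeasureTheory ENNReal ProbabilityTheory

noncomputable section
open scoped Classical

/-- `H^{ν̂}(π)`: entropy of `π` relative to the probability kernel `ν̂ = κ`, i.e. minus the
supremum of `∫ c dπ` over `κ`-normalized measurable functions with well-defined integral. -/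
def Hker {X Y : Type*} [MeasurableSpace X] [MeasurableSpace Y]
    (κ : Kernel Y X) (π : Measure (X × Y)) : EReal :=
  - sSup { r : EReal | ∃ c : X × Y → ℝ, Measurable c ∧
      (∀ y, (∫ x, Real.exp (c (x, y)) ∂(κ y)) = 1) ∧ IntWellDef π c ∧ r = eInt π c }

/-- `H^ν(π)`: entropy of `π` relative to an a priori probability `ν` on `X`. -/
def Hnu {X Y : Type*} [MeasurableSpace X] [MeasurableSpace Y]
    (ν : Measure X) (π : Measure (X × Y)) : EReal :=
  - sSup { r : EReal | ∃ c : X × Y → ℝ, Measurable c ∧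
      (∀ y, (∫ x, Real.exp (c (x, y)) ∂ν) = 1) ∧ IntWellDef π c ∧ r = eInt π c }

/-- The probability `ν̂ dQ` on `X × Y`, defined by
`∫ f d(ν̂ dQ) = ∫_Y ∫_X f(x,y) dν̂^y(x) dQ(y)`. -/
def kernMeas {X Y : Type*} [MeasurableSpace X] [MeasurableSpace Y]
    (κ : Kernel Y X) (Q : Measure Y) : Measure (X × Y) :=
  (Q.compProd κ).map Prod.swap

/-!
Take a set of positive `π`-measure that is null for `ν̂ dQ`. Its section over `y` is `ν̂^y`-null for
`Q`-almost every `y`; since `Q` is the `y`-marginal of `π`, discarding the exceptional `y` costs no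
`π`-mass and leaves a set `B` all of whose sections are null. Then `t 1_B` is `ν̂`-normalized for
every real `t`, because its exponential equals `1` almost everywhere on each section, while
`∫ t 1_B dπ = t π(B)` is unbounded in `t`.
-/

section ExtendedIntegral

variable {α : Type*} [MeasurableSpace α] {μ : Measure α} {f : α → ℝ} {s : Set α}

lemma lintegral_ofReal_neg_of_nonneg (hf : 0 ≤ f) : ∫⁻ x, ENNReal.ofReal (-f x) ∂μ = 0 := by
  simp [fun x => ENNReal.ofReal_of_nonpos (neg_nonpos.2 (hf x))]

lemma intWellDef_of_nonneg (hf : 0 ≤ f) : IntWellDef μ f :=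
  .inr (by simp [lintegral_ofReal_neg_of_nonneg hf])

lemma eInt_of_nonneg (hf : 0 ≤ f) : eInt μ f = (∫⁻ x, ENNReal.ofReal (f x) ∂μ : ℝ≥0∞) := by
  simp [eInt, lintegral_ofReal_neg_of_nonneg hf]

lemma eInt_indicator_const (hs : MeasurableSet s) {t : ℝ} (ht : 0 ≤ t) :
    eInt μ (s.indicator fun _ => t) = (ENNReal.ofReal t * μ s : ℝ≥0∞) := by
  rw [eInt_of_nonneg (Set.indicator_nonneg fun _ _ => ht), ← lintegral_indicator_const hs]
  congr with x
  by_cases hx : x ∈ s <;> simp [hx]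

lemma exists_lt_eInt_indicator_const (hs : MeasurableSet s) (hμs : μ s ≠ 0) {b : EReal}
    (hb : b < ⊤) : ∃ t : ℝ, 0 ≤ t ∧ b < eInt μ (s.indicator fun _ => t) := by
  have hb' : b.toENNReal ≠ ⊤ := EReal.toENNReal_ne_top_iff.2 hb.ne
  obtain ⟨n, hn⟩ := ENNReal.exists_nat_mul_gt hμs hb'
  refine ⟨n, n.cast_nonneg, ?_⟩
  rw [eInt_indicator_const hs n.cast_nonneg, ENNReal.ofReal_natCast]
  calc b ≤ max 0 b := le_max_right 0 b
    _ = (b.toENNReal : EReal) := EReal.coe_toENNReal_eq_max.symm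
    _ < (n * μ s : ℝ≥0∞) := EReal.coe_ennreal_lt_coe_ennreal_iff.2 hn

lemma integral_exp_indicator_of_measure_eq_zero [IsProbabilityMeasure μ] (hμs : μ s = 0)
    (f : α → ℝ) : ∫ x, Real.exp (s.indicator f x) ∂μ = 1 := by
  have h_one : (fun x => Real.exp (s.indicator f x)) =ᵐ[μ] fun _ => 1 := by
    filter_upwards [indicator_meas_zero (f := f) hμs] with x hx
    simp [hx]
  simp [integral_congr_ae h_one]

end ExtendedIntegral

section NullSections

variable {X Y : Type*} [MeasurableSpace X] [MeasurableSpace Y] {κ : Kernel Y X}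
  {π : Measure (X × Y)} {B : Set (X × Y)}

lemma kernMeas_apply [IsSFiniteKernel κ] {Q : Measure Y} [SFinite Q] (hB : MeasurableSet B) :
    kernMeas κ Q B = ∫⁻ y, κ y ((·, y) ⁻¹' B) ∂Q := by
  rw [kernMeas, Measure.map_apply measurable_swap hB, Measure.compProd_apply (measurable_swap hB)]
  rfl

lemma measurable_kernel_section [IsSFiniteKernel κ] (hB : MeasurableSet B) :
    Measurable fun y => κ y ((·, y) ⁻¹' B) :=
  Kernel.measurable_kernel_prodMk_left (measurable_swap hB)

lemma absolutelyContinuous_kernMeas_of_forall_null_sections [IsSFiniteKernel κ] {Q : Measure Y}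
    [SFinite Q] (hπQ : π.map Prod.snd ≪ Q)
    (hnull : ∀ B, MeasurableSet B → (∀ y, κ y ((·, y) ⁻¹' B) = 0) → π B = 0) :
    π ≪ kernMeas κ Q := by
  refine .mk fun A hA hA_null => ?_
  let G : Set Y := {y | κ y ((·, y) ⁻¹' A) = 0}
  have hG : MeasurableSet G := measurable_kernel_section hA (measurableSet_singleton 0)
  have hG_ae : ∀ᵐ y ∂Q, y ∈ G := by
    rwa [kernMeas_apply hA, lintegral_eq_zero_iff (measurable_kernel_section hA)] at hA_null
  have hGπ : ∀ᵐ p ∂π, p.2 ∈ G := ae_of_ae_map measurable_snd.aemeasurable (hπQ.ae_le hG_ae)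
  have hAG_sections : ∀ y, κ y ((·, y) ⁻¹' (A ∩ Prod.snd ⁻¹' G)) = 0 := by
    intro y
    by_cases hy : y ∈ G
    · exact measure_mono_null (fun _ hx => hx.1) hy
    · simp [Set.preimage, hy]
  rw [← measure_inter_conull hGπ]
  exact hnull _ (hA.inter (measurable_snd hG)) hAG_sections

lemma exists_normalized_lt_eInt [IsMarkovKernel κ] (hB : MeasurableSet B)
    (hB_sections : ∀ y, κ y ((·, y) ⁻¹' B) = 0) (hπB : π B ≠ 0) {b : EReal} (hb : b < ⊤) :
    ∃ c : X × Y → ℝ, Measurable c ∧ (∀ y, ∫ x, Real.exp (c (x, y)) ∂κ y = 1) ∧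
      IntWellDef π c ∧ b < eInt π c := by
  obtain ⟨t, ht, hbt⟩ := exists_lt_eInt_indicator_const hB hπB hb
  refine ⟨B.indicator fun _ => t, measurable_const.indicator hB, fun y => ?_,
    intWellDef_of_nonneg (Set.indicator_nonneg fun _ _ => ht), hbt⟩
  exact integral_exp_indicator_of_measure_eq_zero (hB_sections y) fun _ => t

end NullSections

theorem statement6_general {X Y : Type*} [MeasurableSpace X] [MeasurableSpace Y]
    (κ : Kernel Y X) [IsMarkovKernel κ] (pi : Measure (X × Y)) [SFinite pi]
    (Q : Measure Y) (hQ : pi.map Prod.snd = Q) (h : ¬ pi ≪ kernMeas κ Q) :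
    Hker κ pi = ⊥
    ∧ sSup { r : EReal | ∃ c : X × Y → ℝ, Measurable c ∧
        (∀ y, (∫ x, Real.exp (c (x, y)) ∂(κ y)) = 1) ∧ IntWellDef pi c ∧ r = eInt pi c }
      = ⊤ := by
  subst hQ
  obtain ⟨B, hB, hB_sections, hpiB⟩ : ∃ B, MeasurableSet B ∧ (∀ y, κ y ((·, y) ⁻¹' B) = 0) ∧
      pi B ≠ 0 := by
    contrapose! h
    exact absolutelyContinuous_kernMeas_of_forall_null_sections .rfl h
  rw [Hker, EReal.neg_eq_bot_iff, and_self, sSup_eq_top]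
  intro b hb
  obtain ⟨c, hc, hc_norm, hc_int, hbc⟩ := exists_normalized_lt_eInt hB hB_sections hpiB hb
  exact ⟨eInt pi c, ⟨c, hc, hc_norm, hc_int, rfl⟩, hbc⟩

/-- if `π` is not absolutely continuous with respect to `ν̂ dQ` (where `Q` is the
`y`-marginal of `π`), then `H^{ν̂}(π) = −∞`, i.e. the supremum of `∫ c dπ` over `ν̂`-normalized
measurable functions is `+∞`. -/
theorem statement6 {X Y : Type*} [MeasurableSpace X] [MeasurableSpace Y]
    (κ : Kernel Y X) [IsMarkovKernel κ]
    (pi : Measure (X × Y)) [IsProbabilityMeasure pi]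
    (Q : Measure Y) (hQ : pi.map Prod.snd = Q)
    (h : ¬ pi ≪ kernMeas κ Q) :
    Hker κ pi = ⊥
    ∧ sSup { r : EReal | ∃ c : X × Y → ℝ, Measurable c ∧
        (∀ y, (∫ x, Real.exp (c (x, y)) ∂(κ y)) = 1) ∧ IntWellDef pi c ∧ r = eInt pi c }
      = ⊤ :=
  statement6_general κ pi Q hQ h

end
end

section
/- Let X and Y be measurable spaces, ν a probability measure on X, and P a probability measure on X with P ≪ ν. Let Q be any probability measure on Y and π any probability measure on X × Y with x-marginal P. Then: (1) H^ν(π) ≤ S^ν(P); and (2) S^ν(P) = H^ν(P × Q), where P × Q is the product measure on X × Y. -/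
open MeasureTheory ENNReal ProbabilityTheory

noncomputable section
open scoped Classical

/-!
A function of `x` alone is a function of `(x, y)` with the same integral against the marginal, which
gives (1) and one half of (2). Conversely, every slice `c (·, y)` of a normalized `c` on `X × Y` is
normalized on `X`, so its integral against `P` is at most `s = -S^ν(P)`. Writing this bound as
`∫ c⁺ dP + s⁻ ≤ s⁺ + ∫ c⁻ dP` avoids `∞ - ∞`, and Tonelli lets one average it over `Q`.
-/

section ExtendedIntegral

variable {α β : Type*} [MeasurableSpace α] [MeasurableSpace β]

/-- When `b = ∞` both sides hold, the left one because `⊤ - ⊤ = ⊥` in `EReal`. -/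
theorem coe_ennreal_sub_coe_ennreal_le_iff (a b : ℝ≥0∞) (s : EReal) :
    (a : EReal) - b ≤ s ↔ a + (-s).toENNReal ≤ s.toENNReal + b := by
  obtain rfl | hb := eq_or_ne b ⊤
  · simp
  rw [EReal.sub_le_iff_le_add (.inl (EReal.coe_ennreal_ne_bot b)) (.inl (by simpa using hb)),
    ← EReal.coe_ennreal_le_coe_ennreal_iff, EReal.coe_ennreal_add, EReal.coe_ennreal_add]
  obtain hs | hs := le_total 0 s
  · rw [EReal.toENNReal_of_nonpos ((EReal.neg_le_zero.mpr hs)), EReal.coe_toENNReal hs,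
      EReal.coe_ennreal_zero, add_zero]
  · have hs' : 0 ≤ -s := EReal.neg_nonneg.mpr hs
    rw [EReal.toENNReal_of_nonpos hs, EReal.coe_toENNReal hs', EReal.coe_ennreal_zero, zero_add,
      ← EReal.le_sub_iff_add_le (.inr (EReal.coe_ennreal_ne_bot b)) (.inr (by simpa using hb)),
      sub_eq_add_neg, neg_neg, add_comm]

theorem eInt_le_iff {μ : Measure α} {f : α → ℝ} {s : EReal} :
    eInt μ f ≤ s ↔ ∫⁻ x, ENNReal.ofReal (f x) ∂μ + (-s).toENNReal
      ≤ s.toENNReal + ∫⁻ x, ENNReal.ofReal (-f x) ∂μ :=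
  coe_ennreal_sub_coe_ennreal_le_iff _ _ s

theorem eInt_eq_bot_of_not_intWellDef {μ : Measure α} {f : α → ℝ} (h : ¬IntWellDef μ f) :
    eInt μ f = ⊥ := by
  obtain ⟨-, hneg⟩ : _ = ⊤ ∧ _ = ⊤ := by simpa only [IntWellDef, not_or, not_not] using h
  rw [eInt, hneg, EReal.coe_ennreal_top, EReal.sub_top]

theorem eInt_map {μ : Measure α} {f : β → ℝ} {g : α → β} (hf : Measurable f) (hg : Measurable g) :
    eInt (μ.map g) f = eInt μ (f ∘ g) := by
  simp only [eInt, Function.comp_apply, lintegral_map hf.ennreal_ofReal hg,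
    lintegral_map hf.fun_neg.ennreal_ofReal hg]

theorem eInt_prod_le {μ : Measure α} {ρ : Measure β} [SFinite μ] [IsProbabilityMeasure ρ]
    {f : α × β → ℝ} {s : EReal} (hf : Measurable f)
    (hs : ∀ᵐ y ∂ρ, eInt μ (fun x => f (x, y)) ≤ s) : eInt (μ.prod ρ) f ≤ s := by
  simp only [eInt_le_iff] at hs ⊢
  have averaged := lintegral_mono_ae hs
  rwa [lintegral_add_right _ measurable_const, lintegral_add_left measurable_const,
    lintegral_const, lintegral_const, measure_univ, mul_one, mul_one,
    ← lintegral_prod_symm' _ hf.ennreal_ofReal,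
    ← lintegral_prod_symm' _ hf.fun_neg.ennreal_ofReal] at averaged

/-- `IntWellDef` disappears on the right because an ill-defined `eInt` is `⊥`. -/
theorem le_neg_sSup_eInt_iff {μ : Measure α} {p : (α → ℝ) → Prop} {a : EReal} :
    a ≤ -sSup {r : EReal | ∃ c, Measurable c ∧ p c ∧ IntWellDef μ c ∧ r = eInt μ c} ↔
      ∀ c, Measurable c → p c → eInt μ c ≤ -a := by
  rw [EReal.le_neg, sSup_le_iff]
  constructor
  · intro h c hc hpc
    by_cases hw : IntWellDef μ c
    · exact h _ ⟨c, hc, hpc, hw, rfl⟩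
    · exact (eInt_eq_bot_of_not_intWellDef hw).trans_le bot_le
  · rintro h _ ⟨c, hc, hpc, -, rfl⟩
    exact h c hc hpc

end ExtendedIntegral

section Entropy

variable {X Y : Type*} [MeasurableSpace X] [MeasurableSpace Y] {ν P : Measure X}

theorem le_sEnt_iff {a : EReal} :
    a ≤ SEnt ν P ↔
      ∀ c : X → ℝ, Measurable c → ∫ x, Real.exp (c x) ∂ν = 1 → eInt P c ≤ -a :=
  le_neg_sSup_eInt_iff

theorem le_hnu_iff {π : Measure (X × Y)} {a : EReal} :
    a ≤ Hnu ν π ↔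
      ∀ c : X × Y → ℝ, Measurable c → (∀ y, ∫ x, Real.exp (c (x, y)) ∂ν = 1) → eInt π c ≤ -a :=
  le_neg_sSup_eInt_iff

theorem hnu_le_sEnt_map_fst (ν : Measure X) (π : Measure (X × Y)) :
    Hnu ν π ≤ SEnt ν (π.map Prod.fst) := by
  refine le_sEnt_iff.mpr fun c hc hnorm => ?_
  rw [eInt_map hc measurable_fst]
  exact le_hnu_iff.mp le_rfl _ (hc.comp measurable_fst) fun _ => hnorm

theorem sEnt_le_hnu_prod (ν P : Measure X) [SFinite P] (Q : Measure Y) [IsProbabilityMeasure Q] :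
    SEnt ν P ≤ Hnu ν (P.prod Q) :=
  le_hnu_iff.mpr fun _ hc hnorm => eInt_prod_le hc <| ae_of_all _ fun y =>
    le_sEnt_iff.mp le_rfl _ (hc.comp measurable_prodMk_right) (hnorm y)

theorem sEnt_eq_hnu_prod (ν P : Measure X) [SFinite P] (Q : Measure Y) [IsProbabilityMeasure Q] :
    SEnt ν P = Hnu ν (P.prod Q) := by
  refine (sEnt_le_hnu_prod ν P Q).antisymm ?_
  simpa only [Measure.map_fst_prod, measure_univ, one_smul] using hnu_le_sEnt_map_fst ν (P.prod Q)

end Entropy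

theorem statement7_general {X Y : Type*} [MeasurableSpace X] [MeasurableSpace Y]
    (ν P : Measure X) [SFinite P] (Q : Measure Y) [IsProbabilityMeasure Q]
    (pi : Measure (X × Y)) (hP : pi.map Prod.fst = P) :
    Hnu ν pi ≤ SEnt ν P ∧ SEnt ν P = Hnu ν (P.prod Q) :=
  ⟨hP ▸ hnu_le_sEnt_map_fst ν pi, sEnt_eq_hnu_prod ν P Q⟩

/-- for `P ≪ ν`, (1) `H^ν(π) ≤ S^ν(P)` whenever `π` has `x`-marginal `P`, and
(2) `S^ν(P) = H^ν(P × Q)` for any probability `Q` on `Y`. -/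
theorem statement7 {X Y : Type*} [MeasurableSpace X] [MeasurableSpace Y]
    (ν P : Measure X) [IsProbabilityMeasure ν] [IsProbabilityMeasure P]
    (Q : Measure Y) [IsProbabilityMeasure Q]
    (pi : Measure (X × Y)) [IsProbabilityMeasure pi]
    (hac : P ≪ ν) (hP : pi.map Prod.fst = P) :
    Hnu ν pi ≤ SEnt ν P ∧ SEnt ν P = Hnu ν (P.prod Q) :=
  statement7_general ν P Q pi hP

end
end

section
/- Let X and Y be measurable spaces and ν̂ a probability kernel from Y to X. Then: (1) H^{ν̂} is concave, i.e. for probability measures π₁, π₂ on X × Y and t ∈ [0,1], H^{ν̂}(t π₁ + (1−t) π₂) ≥ t H^{ν̂}(π₁) + (1−t) H^{ν̂}(π₂); and (2) H^{ν̂} is upper semicontinuous in the following sense: if (π_n) and π are probability measures on X × Y such that ∫ f dπ_n → ∫ f dπ for every bounded measurable function f on X × Y, then limsup_n H^{ν̂}(π_n) ≤ H^{ν̂}(π). -/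
open MeasureTheory ENNReal ProbabilityTheory
open scoped NNReal

noncomputable section
open scoped Classical

/-!
`H^{ν̂}` is an infimum of the functionals `π ↦ −∫ c dπ`, each of which is additive and positively
homogeneous; hence `H^{ν̂}` is superadditive and positively homogeneous, and in particular concave.

For upper semicontinuity, unbounded `c` have to be discarded. If `c` is normalized, its truncation
`cₖ` to `[-k, k]` satisfies `∫ exp cₖ dν̂^y ≤ 1 + e⁻ᵏ` uniformly in `y`, because
`exp cₖ ≤ exp c + e⁻ᵏ`. Renormalizing `cₖ` therefore lowers its integral by at most `e⁻ᵏ` times the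
total mass, so the infimum may be taken over bounded normalized functions. Each of these gives a
functional which is continuous along `π_n → π`.
-/

open Filter Topology

theorem ereal_neg_add_neg_le_neg_add (a b : EReal) : -a + -b ≤ -(a + b) := by
  induction a <;> induction b
  case coe.coe x y => exact_mod_cast (neg_add x y).ge
  all_goals simp

section ExtendedIntegral

variable {α : Type*} [MeasurableSpace α] {μ ν : Measure α} {f : α → ℝ}

theorem eInt_eq_integral (hf : Integrable f μ) : eInt μ f = (∫ x, f x ∂μ : ℝ) := by
  have hpos : ∫⁻ x, ENNReal.ofReal (f x) ∂μ ≠ ⊤ := hf.lintegral_lt_top.ne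
  have hneg : ∫⁻ x, ENNReal.ofReal (-f x) ∂μ ≠ ⊤ := hf.neg.lintegral_lt_top.ne
  rw [eInt, integral_eq_lintegral_pos_part_sub_lintegral_neg_part hf, EReal.coe_sub,
    EReal.coe_ennreal_toReal hpos, EReal.coe_ennreal_toReal hneg]

theorem intWellDef_of_integrable (hf : Integrable f μ) : IntWellDef μ f :=
  Or.inl hf.lintegral_lt_top.ne

theorem IntWellDef.mono_measure (hf : IntWellDef ν f) (hμν : μ ≤ ν) : IntWellDef μ f :=
  hf.imp (ne_top_of_le_ne_top · (lintegral_mono' hμν le_rfl))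
    (ne_top_of_le_ne_top · (lintegral_mono' hμν le_rfl))

theorem IntWellDef.of_smul_measure {t : ℝ≥0} (ht : t ≠ 0) (hf : IntWellDef (t • μ) f) :
    IntWellDef μ f := by
  have ht' : (t : ℝ≥0∞) ≠ 0 := ENNReal.coe_ne_zero.mpr ht
  simp only [IntWellDef, lintegral_smul_measure, ENNReal.smul_def, smul_eq_mul] at hf
  exact hf.imp (mt fun h => h ▸ ENNReal.mul_top ht') (mt fun h => h ▸ ENNReal.mul_top ht')

theorem eInt_add_measure : eInt (μ + ν) f = eInt μ f + eInt ν f := by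
  simp only [eInt, lintegral_add_measure, EReal.coe_ennreal_add]
  exact EReal.add_sub_add_comm (Or.inl (EReal.coe_ennreal_ne_bot _))
    (Or.inr (EReal.coe_ennreal_ne_bot _))

theorem eInt_smul_measure (t : ℝ≥0) : eInt (t • μ) f = ((t : ℝ) : EReal) * eInt μ f := by
  simp only [eInt, lintegral_smul_measure, ENNReal.smul_def, smul_eq_mul, EReal.coe_ennreal_mul]
  exact (EReal.mul_sub_of_nonneg_of_ne_top (EReal.coe_nonneg.mpr t.coe_nonneg)
    (EReal.coe_ne_top _)).symm

end ExtendedIntegral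

section Truncation

/-- Truncation of `x` to `[-r, r]`. Unlike `ProbabilityTheory.truncation`, values outside the
interval are moved to its nearest endpoint rather than to `0`. -/
def clamp (r x : ℝ) : ℝ := max (min x r) (-r)

theorem abs_clamp_le (r x : ℝ) : |clamp r x| ≤ |r| :=
  abs_le.mpr ⟨(neg_le_neg (le_abs_self r)).trans (le_max_right _ _),
    max_le_max_right (-r) (min_le_right x r)⟩

theorem clamp_neg {r : ℝ} (hr : 0 ≤ r) (x : ℝ) : clamp r (-x) = -clamp r x := by
  rw [clamp, clamp, ← min_neg_neg, ← max_neg_neg, neg_neg, max_min_distrib_right,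
    max_eq_left (neg_le_self hr)]

theorem ofReal_clamp {r : ℝ} (hr : 0 ≤ r) (x : ℝ) :
    ENNReal.ofReal (clamp r x) = min (ENNReal.ofReal x) (ENNReal.ofReal r) := by
  rw [clamp, ENNReal.ofReal_max, ENNReal.ofReal_min, ENNReal.ofReal_of_nonpos (neg_nonpos.mpr hr),
    max_eq_left zero_le]

theorem exp_clamp_le (r x : ℝ) : Real.exp (clamp r x) ≤ Real.exp x + Real.exp (-r) := by
  rw [clamp, Real.exp_monotone.map_max]
  exact (max_le_add_of_nonneg (Real.exp_nonneg _) (Real.exp_nonneg _)).trans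
    (add_le_add_left (Real.exp_le_exp.mpr (min_le_left x r)) _)

theorem measurable_clamp (r : ℝ) : Measurable (clamp r) :=
  (measurable_id.min measurable_const).max measurable_const

variable {α : Type*} [MeasurableSpace α] {μ : Measure α}

theorem tendsto_lintegral_min_natCast {g : α → ℝ≥0∞} (hg : AEMeasurable g μ) :
    Tendsto (fun k : ℕ => ∫⁻ x, min (g x) k ∂μ) atTop (𝓝 (∫⁻ x, g x ∂μ)) := by
  refine lintegral_tendsto_of_tendsto_of_monotone (fun k => hg.min aemeasurable_const)
    (ae_of_all _ fun x k l hkl => min_le_min_left _ (Nat.cast_le.mpr hkl)) (ae_of_all _ fun x => ?_)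
  simpa using (tendsto_const_nhds (x := g x)).min ENNReal.tendsto_nat_nhds_top

theorem eInt_clamp (f : α → ℝ) (k : ℕ) :
    eInt μ (fun x => clamp k (f x)) = (∫⁻ x, min (ENNReal.ofReal (f x)) k ∂μ : ℝ≥0∞)
      - (∫⁻ x, min (ENNReal.ofReal (-f x)) k ∂μ : ℝ≥0∞) := by
  simp only [eInt, ← clamp_neg k.cast_nonneg, ofReal_clamp k.cast_nonneg, ENNReal.ofReal_natCast]

theorem tendsto_eInt_clamp {f : α → ℝ} (hf : AEMeasurable f μ) (hwd : IntWellDef μ f) :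
    Tendsto (fun k : ℕ => eInt μ (fun x => clamp k (f x))) atTop (𝓝 (eInt μ f)) := by
  simp only [eInt_clamp]
  have hpos := EReal.tendsto_coe_ennreal.mpr (tendsto_lintegral_min_natCast hf.ennreal_ofReal)
  have hneg := EReal.tendsto_coe_ennreal.mpr (tendsto_lintegral_min_natCast hf.neg.ennreal_ofReal)
  refine (EReal.continuousAt_add ?_ ?_).tendsto.comp (hpos.prodMk_nhds hneg.neg)
  · simpa [IntWellDef] using hwd
  · exact Or.inl (EReal.coe_ennreal_ne_bot _)

end Truncation

section LogPartition

variable {α : Type*} [MeasurableSpace α] {μ : Measure α} {f : α → ℝ}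

theorem integrable_exp_of_abs_le [IsFiniteMeasure μ] {C : ℝ} (hf : AEMeasurable f μ)
    (hC : ∀ x, |f x| ≤ C) : Integrable (fun x => Real.exp (f x)) μ :=
  Integrable.of_bound hf.exp.aestronglyMeasurable (Real.exp C) <| ae_of_all _ fun x => by
    simpa using (abs_le.mp (hC x)).2

variable [IsProbabilityMeasure μ]

theorem abs_log_integral_exp_le {C : ℝ} (hf : AEMeasurable f μ) (hC : ∀ x, |f x| ≤ C) :
    |Real.log (∫ x, Real.exp (f x) ∂μ)| ≤ C := by
  have hint := integrable_exp_of_abs_le hf hC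
  have hpos := integral_exp_pos hint
  have hmem : ∫ x, Real.exp (f x) ∂μ ∈ Set.Icc (Real.exp (-C)) (Real.exp C) :=
    (convex_Icc _ _).integral_mem isClosed_Icc
      (ae_of_all _ fun x => ⟨Real.exp_le_exp.mpr (abs_le.mp (hC x)).1,
        Real.exp_le_exp.mpr (abs_le.mp (hC x)).2⟩) hint
  exact abs_le.mpr ⟨(Real.le_log_iff_exp_le hpos).mpr hmem.1,
    (Real.log_le_iff_le_exp hpos).mpr hmem.2⟩

theorem log_integral_exp_clamp_le (hf : AEMeasurable f μ) (hexp : ∫ x, Real.exp (f x) ∂μ = 1)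
    (r : ℝ) : Real.log (∫ x, Real.exp (clamp r (f x)) ∂μ) ≤ Real.exp (-r) := by
  have hint : Integrable (fun x => Real.exp (f x)) μ :=
    not_imp_comm.mp integral_undef (hexp ▸ one_ne_zero)
  have hclamp : Integrable (fun x => Real.exp (clamp r (f x))) μ :=
    integrable_exp_of_abs_le ((measurable_clamp r).comp_aemeasurable hf)
      fun x => abs_clamp_le r (f x)
  have hle : ∫ x, Real.exp (clamp r (f x)) ∂μ ≤ 1 + Real.exp (-r) := calc
    _ ≤ ∫ x, (Real.exp (f x) + Real.exp (-r)) ∂μ :=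
      integral_mono hclamp (hint.add (integrable_const _)) fun x => exp_clamp_le r (f x)
    _ = 1 + Real.exp (-r) := by
      rw [integral_add hint (integrable_const _), hexp, integral_const, probReal_univ, one_smul]
  linarith [Real.log_le_sub_one_of_pos (integral_exp_pos hclamp)]

end LogPartition

section Normalization

variable {X Y : Type*} [MeasurableSpace X] [MeasurableSpace Y] {κ : Kernel Y X}

/-- The `κ`-normalized measurable functions, over which the supremum in `Hker κ` is taken. -/
structure IsKernelNormalized (κ : Kernel Y X) (c : X × Y → ℝ) : Prop where
  measurable : Measurable c
  integral_exp_eq_one (y : Y) : ∫ x, Real.exp (c (x, y)) ∂κ y = 1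

/-- The function `f` minus its log-partition function `y ↦ log ∫ exp f(x, y) dκ^y(x)`; this turns
a bounded measurable function into a `κ`-normalized one. -/
def kernelNormalize (κ : Kernel Y X) (f : X × Y → ℝ) (p : X × Y) : ℝ :=
  f p - Real.log (∫ x, Real.exp (f (x, p.2)) ∂κ p.2)

theorem measurable_log_integral_exp [IsSFiniteKernel κ] {f : X × Y → ℝ} (hf : Measurable f) :
    Measurable fun y => Real.log (∫ x, Real.exp (f (x, y)) ∂κ y) :=
  (hf.exp.stronglyMeasurable.integral_kernel_prod_left' (κ := κ)).measurable.log

variable [IsMarkovKernel κ] {f c : X × Y → ℝ} {C : ℝ}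

theorem isKernelNormalized_kernelNormalize (hf : Measurable f) (hC : ∀ p, |f p| ≤ C) :
    IsKernelNormalized κ (kernelNormalize κ f) where
  measurable := hf.sub ((measurable_log_integral_exp hf).comp measurable_snd)
  integral_exp_eq_one y := by
    have hpos : 0 < ∫ x, Real.exp (f (x, y)) ∂κ y :=
      integral_exp_pos (integrable_exp_of_abs_le (hf.comp measurable_prodMk_right).aemeasurable
        fun x => hC (x, y))
    simp only [kernelNormalize, Real.exp_sub, Real.exp_log hpos, integral_div, div_self hpos.ne']

theorem abs_kernelNormalize_le (hf : Measurable f) (hC : ∀ p, |f p| ≤ C) (p : X × Y) :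
    |kernelNormalize κ f p| ≤ C + C :=
  (abs_sub _ _).trans <| add_le_add (hC p) <|
    abs_log_integral_exp_le (hf.comp measurable_prodMk_right).aemeasurable fun x => hC (x, p.2)

theorem IsKernelNormalized.integral_clamp_sub_le (hc : IsKernelNormalized κ c)
    (π : Measure (X × Y)) [IsFiniteMeasure π] (r : ℝ) :
    ∫ p, clamp r (c p) ∂π - π.real Set.univ * Real.exp (-r)
      ≤ ∫ p, kernelNormalize κ (fun q => clamp r (c q)) p ∂π := by
  have hmeas : Measurable fun p => clamp r (c p) := (measurable_clamp r).comp hc.measurable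
  have hbound (p : X × Y) : |clamp r (c p)| ≤ |r| := abs_clamp_le r (c p)
  have hint : Integrable (fun p => clamp r (c p)) π :=
    .of_bound hmeas.aestronglyMeasurable |r| (ae_of_all _ hbound)
  have hnorm : Integrable (kernelNormalize κ fun q => clamp r (c q)) π :=
    .of_bound (isKernelNormalized_kernelNormalize hmeas hbound).measurable.aestronglyMeasurable
      (|r| + |r|) (ae_of_all _ (abs_kernelNormalize_le hmeas hbound))
  rw [← smul_eq_mul, ← integral_const, ← integral_sub hint (integrable_const _)]
  exact integral_mono (hint.sub (integrable_const _)) hnorm fun p => sub_le_sub_left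
    (log_integral_exp_clamp_le (hc.measurable.comp measurable_prodMk_right).aemeasurable
      (hc.integral_exp_eq_one p.2) r) _

end Normalization

section Entropy

variable {X Y : Type*} [MeasurableSpace X] [MeasurableSpace Y] {κ : Kernel Y X}
  {π : Measure (X × Y)} {c : X × Y → ℝ} {b : EReal}

theorem le_Hker_iff :
    b ≤ Hker κ π ↔ ∀ c, IsKernelNormalized κ c → IntWellDef π c → b ≤ -eInt π c := by
  rw [Hker, EReal.le_neg, sSup_le_iff]
  constructor
  · exact fun h c hc hwd =>
      EReal.le_neg.mpr (h _ ⟨c, hc.measurable, hc.integral_exp_eq_one, hwd, rfl⟩)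
  · rintro h _ ⟨c, hmeas, hone, hwd, rfl⟩
    exact EReal.le_neg.mp (h c ⟨hmeas, hone⟩ hwd)

theorem Hker_le_neg_eInt (hc : IsKernelNormalized κ c) (hwd : IntWellDef π c) :
    Hker κ π ≤ -eInt π c :=
  le_Hker_iff.mp le_rfl c hc hwd

theorem Hker_add_Hker_le (κ : Kernel Y X) (π₁ π₂ : Measure (X × Y)) :
    Hker κ π₁ + Hker κ π₂ ≤ Hker κ (π₁ + π₂) := by
  refine le_Hker_iff.mpr fun c hc hwd => ?_
  calc Hker κ π₁ + Hker κ π₂ ≤ -eInt π₁ c + -eInt π₂ c :=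
        add_le_add (Hker_le_neg_eInt hc (hwd.mono_measure (Measure.le_add_right le_rfl)))
          (Hker_le_neg_eInt hc (hwd.mono_measure (Measure.le_add_left le_rfl)))
    _ ≤ -eInt (π₁ + π₂) c := by
        rw [eInt_add_measure]
        exact ereal_neg_add_neg_le_neg_add _ _

theorem mul_Hker_le (κ : Kernel Y X) (π : Measure (X × Y)) (t : ℝ≥0) :
    ((t : ℝ) : EReal) * Hker κ π ≤ Hker κ (t • π) := by
  refine le_Hker_iff.mpr fun c hc hwd => ?_
  rw [eInt_smul_measure, ← mul_neg]
  rcases eq_or_ne t 0 with rfl | ht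
  · simp
  · exact mul_le_mul_of_nonneg_left (Hker_le_neg_eInt hc (hwd.of_smul_measure ht))
      (EReal.coe_nonneg.mpr t.coe_nonneg)

theorem Hker_le_neg_integral [IsFiniteMeasure π] (hc : IsKernelNormalized κ c)
    (hbdd : ∃ C, ∀ p, |c p| ≤ C) : Hker κ π ≤ (-∫ p, c p ∂π : ℝ) := by
  obtain ⟨C, hC⟩ := hbdd
  have hint : Integrable c π := .of_bound hc.measurable.aestronglyMeasurable C (ae_of_all _ hC)
  simpa only [eInt_eq_integral hint, EReal.coe_neg]
    using Hker_le_neg_eInt hc (intWellDef_of_integrable hint)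

variable [IsMarkovKernel κ]

theorem exists_bounded_neg_integral_lt_of_neg_eInt_lt [IsFiniteMeasure π]
    (hc : IsKernelNormalized κ c) (hwd : IntWellDef π c) (hb : -eInt π c < b) :
    ∃ c', IsKernelNormalized κ c' ∧ (∃ C, ∀ p, |c' p| ≤ C) ∧ ((-∫ p, c' p ∂π : ℝ) : EReal) < b := by
  have hmeas (k : ℕ) : Measurable fun p => clamp k (c p) := (measurable_clamp k).comp hc.measurable
  have hbound (k : ℕ) (p : X × Y) : |clamp k (c p)| ≤ |(k : ℝ)| := abs_clamp_le k (c p)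
  have hint (k : ℕ) : Integrable (fun p => clamp k (c p)) π :=
    .of_bound (hmeas k).aestronglyMeasurable |(k : ℝ)| (ae_of_all _ (hbound k))
  have hlim : Tendsto (fun k : ℕ => -((∫ p, clamp k (c p) ∂π : ℝ) : EReal)) atTop
      (𝓝 (-eInt π c)) := by
    simpa only [eInt_eq_integral (hint _)] using
      (tendsto_eInt_clamp hc.measurable.aemeasurable hwd).neg
  have herr : Tendsto (fun k : ℕ => ((π.real Set.univ * Real.exp (-k) : ℝ) : EReal)) atTop
      (𝓝 0) := by
    refine EReal.tendsto_coe.mpr ?_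
    simpa using (Real.tendsto_exp_neg_atTop_nhds_zero.comp
      tendsto_natCast_atTop_atTop).const_mul (π.real Set.univ)
  have hsum := (EReal.continuousAt_add (p := (-eInt π c, 0)) (by simp) (by simp)).tendsto.comp
    (hlim.prodMk_nhds herr)
  rw [add_zero] at hsum
  obtain ⟨k, hk⟩ := (hsum.eventually_lt_const hb).exists
  refine ⟨_, isKernelNormalized_kernelNormalize (hmeas k) (hbound k),
    ⟨_, abs_kernelNormalize_le (hmeas k) (hbound k)⟩, lt_of_le_of_lt ?_ hk⟩
  have hle := hc.integral_clamp_sub_le π k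
  exact EReal.coe_le_coe (by linarith)

theorem Hker_lt_iff_exists_bounded [IsFiniteMeasure π] :
    Hker κ π < b ↔ ∃ c, IsKernelNormalized κ c ∧ (∃ C, ∀ p, |c p| ≤ C) ∧
      ((-∫ p, c p ∂π : ℝ) : EReal) < b := by
  constructor
  · intro hb
    simp only [← not_le, le_Hker_iff, not_forall] at hb
    obtain ⟨c, hc, hwd, hlt⟩ := hb
    exact exists_bounded_neg_integral_lt_of_neg_eInt_lt hc hwd (not_le.mp hlt)
  · rintro ⟨c, hc, hbdd, hlt⟩
    exact (Hker_le_neg_integral hc hbdd).trans_lt hlt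

theorem limsup_Hker_le {ι : Type*} {l : Filter ι} {ρ : ι → Measure (X × Y)}
    [∀ i, IsFiniteMeasure (ρ i)] [IsFiniteMeasure π]
    (hρ : ∀ f : X × Y → ℝ, Measurable f → (∃ C, ∀ p, |f p| ≤ C) →
      Tendsto (fun i => ∫ p, f p ∂ρ i) l (𝓝 (∫ p, f p ∂π))) :
    limsup (fun i => Hker κ (ρ i)) l ≤ Hker κ π := by
  refine le_of_forall_gt_imp_ge_of_dense fun b hb => ?_
  obtain ⟨c, hc, hbdd, hlt⟩ := Hker_lt_iff_exists_bounded.mp hb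
  have hlim : Tendsto (fun i => ((-∫ p, c p ∂ρ i : ℝ) : EReal)) l (𝓝 (-∫ p, c p ∂π : ℝ)) :=
    EReal.tendsto_coe.mpr (hρ c hc.measurable hbdd).neg
  refine limsup_le_of_le (by isBoundedDefault) ((hlim.eventually_lt_const hlt).mono fun i hi => ?_)
  exact (Hker_lt_iff_exists_bounded.mpr ⟨c, hc, hbdd, hi⟩).le

end Entropy

theorem statement8_general {X Y ι : Type*} [MeasurableSpace X] [MeasurableSpace Y]
    (κ : Kernel Y X) [IsMarkovKernel κ] (l : Filter ι) :
    (∀ (π₁ π₂ : Measure (X × Y)) (t s : ℝ≥0),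
      ((t : ℝ) : EReal) * Hker κ π₁ + ((s : ℝ) : EReal) * Hker κ π₂
        ≤ Hker κ (t • π₁ + s • π₂))
    ∧ (∀ (ρ : ι → Measure (X × Y)) (π : Measure (X × Y)) [∀ i, IsFiniteMeasure (ρ i)]
        [IsFiniteMeasure π],
        (∀ f : X × Y → ℝ, Measurable f → (∃ C, ∀ p, |f p| ≤ C) →
          Tendsto (fun i => ∫ p, f p ∂ρ i) l (𝓝 (∫ p, f p ∂π))) →
        limsup (fun i => Hker κ (ρ i)) l ≤ Hker κ π) :=
  ⟨fun π₁ π₂ t s => (add_le_add (mul_Hker_le κ π₁ t) (mul_Hker_le κ π₂ s)).trans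
    (Hker_add_Hker_le κ _ _), fun _ _ _ _ => limsup_Hker_le⟩

/-- (1) `H^{ν̂}` is concave on probability measures, and (2) `H^{ν̂}` is upper
semicontinuous: if `∫ f dπₙ → ∫ f dπ` for every bounded measurable `f`, then
`limsupₙ H^{ν̂}(πₙ) ≤ H^{ν̂}(π)`. -/
theorem statement8 {X Y : Type*} [MeasurableSpace X] [MeasurableSpace Y]
    (κ : Kernel Y X) [IsMarkovKernel κ] :
    (∀ (pi₁ pi₂ : Measure (X × Y)), IsProbabilityMeasure pi₁ → IsProbabilityMeasure pi₂ →
      ∀ t : ℝ≥0, t ≤ 1 →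
        ((t : ℝ) : EReal) * Hker κ pi₁ + (((1 - t : ℝ≥0) : ℝ) : EReal) * Hker κ pi₂
          ≤ Hker κ (t • pi₁ + (1 - t) • pi₂))
    ∧ (∀ (pi : ℕ → Measure (X × Y)) (piLim : Measure (X × Y)),
        (∀ n, IsProbabilityMeasure (pi n)) → IsProbabilityMeasure piLim →
        (∀ f : X × Y → ℝ, Measurable f → (∃ C, ∀ p, |f p| ≤ C) →
          Filter.Tendsto (fun n => ∫ p, f p ∂(pi n)) Filter.atTop
            (nhds (∫ p, f p ∂piLim))) →
        Filter.limsup (fun n => Hker κ (pi n)) Filter.atTop ≤ Hker κ piLim) :=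
  ⟨fun pi₁ pi₂ _ _ t _ => (statement8_general κ (atTop : Filter ℕ)).1 pi₁ pi₂ t (1 - t),
    fun pi piLim _ _ => (statement8_general κ atTop).2 pi piLim⟩

end
end
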